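/- arXiv:2603.02533 — 8 statements merged into one kernel-verified Lean document; each statement's English description precedes it below -/
import Mathlib

section
/- For every γ ≥ 0 and every p ∈ (0,1), the second derivative of p ↦ L_γ(p) at p equals ((1-p)^(γ-2)/p²)·[γ(1-γ)·p²·log p + 2γ·p(1-p) + (1-p)²], this quantity is strictly positive, and consequently p ↦ L_γ(p) is strictly convex on (0,1). -/
/-- The focal-loss `L_γ(p) = (1-p)^γ log(1/p)`. -/
noncomputable def focalLoss (γ p : ℝ) : ℝ := (1 - p) ^ γ * Real.log (1 / p)

/-!
Write `L_γ'' = ((1 - p) ^ (γ - 2) / p ^ 2) * B`, the prefactor being positive on `(0, 1)`. There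
`-γ² p² log p ≥ 0` because `log p ≤ 0`, and `p log p ≥ p - 1`. Expanding `B` in powers of `γ`,
these two bounds give `B ≥ γ p (1 - p) + (1 - p) ^ 2 > 0` for all `γ ≥ 0`.
-/

lemma hasDerivAt_one_sub_rpow (a : ℝ) {x : ℝ} (hx : x ≠ 1) :
    HasDerivAt (fun y : ℝ => (1 - y) ^ a) (-(a * (1 - x) ^ (a - 1))) x := by
  have h := ((hasDerivAt_id x).const_sub 1).rpow_const (p := a) (Or.inl (sub_ne_zero.2 hx.symm))
  exact h.congr_deriv (by simp only [id_eq]; ring)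

lemma focalLoss_eq_neg_mul_log (γ p : ℝ) : focalLoss γ p = -((1 - p) ^ γ * Real.log p) := by
  rw [focalLoss, one_div, Real.log_inv, mul_neg]

lemma hasDerivAt_focalLoss (γ : ℝ) {p : ℝ} (hp₀ : p ≠ 0) (hp₁ : p ≠ 1) :
    HasDerivAt (focalLoss γ) (γ * ((1 - p) ^ (γ - 1) * Real.log p) - (1 - p) ^ γ * p⁻¹) p := by
  rw [funext (focalLoss_eq_neg_mul_log γ)]
  exact ((hasDerivAt_one_sub_rpow γ hp₁).mul (Real.hasDerivAt_log hp₀)).neg.congr_deriv (by ring)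

lemma deriv_focalLoss_eventuallyEq (γ : ℝ) {p : ℝ} (hp₀ : p ≠ 0) (hp₁ : p ≠ 1) :
    deriv (focalLoss γ) =ᶠ[nhds p]
      fun x => γ * ((1 - x) ^ (γ - 1) * Real.log x) - (1 - x) ^ γ * x⁻¹ := by
  filter_upwards [isOpen_ne.mem_nhds hp₀, isOpen_ne.mem_nhds hp₁] with x hx₀ hx₁
  exact (hasDerivAt_focalLoss γ hx₀ hx₁).deriv

lemma hasDerivAt_deriv_focalLoss (γ : ℝ) {p : ℝ} (hp₀ : p ≠ 0) (hp₁ : p ≠ 1) :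
    HasDerivAt (deriv (focalLoss γ))
      ((1 - p) ^ (γ - 2) / p ^ 2 *
        (γ * (1 - γ) * p ^ 2 * Real.log p + 2 * γ * p * (1 - p) + (1 - p) ^ 2)) p := by
  have hlog := (hasDerivAt_one_sub_rpow (γ - 1) hp₁).mul (Real.hasDerivAt_log hp₀)
  have hinv := (hasDerivAt_one_sub_rpow γ hp₁).mul (hasDerivAt_inv hp₀)
  refine (((hlog.const_mul γ).sub hinv).congr_of_eventuallyEq
    (deriv_focalLoss_eventuallyEq γ hp₀ hp₁)).congr_deriv ?_
  have hq : 1 - p ≠ 0 := sub_ne_zero.2 hp₁.symm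
  have rpow_sub_one : (1 - p) ^ (γ - 1) = (1 - p) ^ (γ - 2) * (1 - p) := by
    rw [← Real.rpow_add_one hq]
    ring_nf
  have rpow_self : (1 - p) ^ γ = (1 - p) ^ (γ - 2) * (1 - p) ^ 2 := by
    rw [← Real.rpow_add_natCast hq, Nat.cast_ofNat, sub_add_cancel]
  rw [show γ - 1 - 1 = γ - 2 by ring, rpow_sub_one, rpow_self]
  field_simp
  ring

lemma focalLoss_second_deriv_factor_pos {γ p : ℝ} (hγ : 0 ≤ γ) (hp : p ∈ Set.Ioo (0 : ℝ) 1) :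
    0 < γ * (1 - γ) * p ^ 2 * Real.log p + 2 * γ * p * (1 - p) + (1 - p) ^ 2 := by
  obtain ⟨hp₀, hp₁⟩ := hp
  have hq : 0 < 1 - p := sub_pos.2 hp₁
  have hlog : 0 ≤ -Real.log p := neg_nonneg.2 (Real.log_nonpos hp₀.le hp₁.le)
  have hmul_log : 0 ≤ p * Real.log p - (p - 1) :=
    sub_nonneg.2 (Real.self_sub_one_le_mul_log hp₀.le)
  calc
    0 < γ * p * (1 - p) + (1 - p) ^ 2 :=
      add_pos_of_nonneg_of_pos (mul_nonneg (mul_nonneg hγ hp₀.le) hq.le) (pow_pos hq 2)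
    _ ≤ γ ^ 2 * p ^ 2 * (-Real.log p) + γ * p * (p * Real.log p - (p - 1))
          + (γ * p * (1 - p) + (1 - p) ^ 2) := le_add_of_nonneg_left (by positivity)
    _ = γ * (1 - γ) * p ^ 2 * Real.log p + 2 * γ * p * (1 - p) + (1 - p) ^ 2 := by ring

lemma focalLoss_second_deriv_pos {γ p : ℝ} (hγ : 0 ≤ γ) (hp : p ∈ Set.Ioo (0 : ℝ) 1) :
    0 < (1 - p) ^ (γ - 2) / p ^ 2 *
      (γ * (1 - γ) * p ^ 2 * Real.log p + 2 * γ * p * (1 - p) + (1 - p) ^ 2) :=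
  mul_pos (div_pos (Real.rpow_pos_of_pos (sub_pos.2 hp.2) _) (pow_pos hp.1 2))
    (focalLoss_second_deriv_factor_pos hγ hp)

lemma strictConvexOn_focalLoss {γ : ℝ} (hγ : 0 ≤ γ) :
    StrictConvexOn ℝ (Set.Ioo 0 1) (focalLoss γ) := by
  refine strictConvexOn_of_deriv2_pos' (convex_Ioo 0 1) (fun p hp => ?_) fun p hp => ?_
  · exact (hasDerivAt_focalLoss γ hp.1.ne' hp.2.ne).continuousAt.continuousWithinAt
  · rw [Function.iterate_succ_apply, Function.iterate_one,
      (hasDerivAt_deriv_focalLoss γ hp.1.ne' hp.2.ne).deriv]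
    exact focalLoss_second_deriv_pos hγ hp

/-- for every `γ ≥ 0` and `p ∈ (0,1)`, the second derivative of
`p ↦ L_γ(p)` at `p` equals
`((1-p)^(γ-2)/p²) (γ(1-γ) p² log p + 2γ p(1-p) + (1-p)²)`, this quantity is strictly
positive, and `L_γ` is strictly convex on `(0,1)`. -/
theorem focalLoss_second_deriv_pos_and_strictConvexOn (γ : ℝ) (hγ : 0 ≤ γ) :
    (∀ p ∈ Set.Ioo (0 : ℝ) 1,
      HasDerivAt (deriv (focalLoss γ))
        ((1 - p) ^ (γ - 2) / p ^ 2 *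
          (γ * (1 - γ) * p ^ 2 * Real.log p + 2 * γ * p * (1 - p) + (1 - p) ^ 2)) p ∧
      0 < (1 - p) ^ (γ - 2) / p ^ 2 *
          (γ * (1 - γ) * p ^ 2 * Real.log p + 2 * γ * p * (1 - p) + (1 - p) ^ 2)) ∧
    StrictConvexOn ℝ (Set.Ioo 0 1) (focalLoss γ) := by
  refine ⟨fun p hp => ⟨?_, ?_⟩, strictConvexOn_focalLoss hγ⟩
  · exact hasDerivAt_deriv_focalLoss γ hp.1.ne' hp.2.ne
  · exact focalLoss_second_deriv_pos hγ hp
end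

section
/- The map p ↦ κ(p) is strictly decreasing on the interval (0,1). -/
/-!
Substituting `t = log (1 / p)`, a decreasing bijection from `(0, 1)` to `(0, ∞)`, turns `κ` into
`exp t - 2 * (exp t - 1) / t`. The derivative of the latter has the sign of
`exp t * (t ^ 2 - 2 * t + 2) - 2`, which is positive because `exp t ≥ 1 + t + t ^ 2 / 2` and
`(t ^ 2 + 2 * t + 2) * (t ^ 2 - 2 * t + 2) = t ^ 4 + 4`.
-/

lemma two_lt_exp_mul_sq_sub_two_mul_add_two {t : ℝ} (ht : 0 < t) :
    2 < Real.exp t * (t ^ 2 - 2 * t + 2) := by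
  have quadratic_nonneg : 0 ≤ t ^ 2 - 2 * t + 2 := by nlinarith [sq_nonneg (t - 1)]
  calc
    2 < 2 + t ^ 4 / 2 := lt_add_of_pos_right 2 (by positivity)
    _ = (1 + t + t ^ 2 / 2) * (t ^ 2 - 2 * t + 2) := by ring
    _ ≤ Real.exp t * (t ^ 2 - 2 * t + 2) :=
      mul_le_mul_of_nonneg_right (Real.quadratic_le_exp_of_nonneg ht.le) quadratic_nonneg

lemma hasDerivAt_exp_sub_two_mul_exp_sub_one_div {t : ℝ} (ht : t ≠ 0) :
    HasDerivAt (fun t : ℝ => Real.exp t - 2 * (Real.exp t - 1) / t)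
      ((Real.exp t * (t ^ 2 - 2 * t + 2) - 2) / t ^ 2) t := by
  have h := (Real.hasDerivAt_exp t).fun_sub
    ((((Real.hasDerivAt_exp t).sub_const 1).const_mul 2).fun_div (hasDerivAt_id' t) ht)
  refine h.congr_deriv ?_
  field_simp
  ring

lemma strictMonoOn_exp_sub_two_mul_exp_sub_one_div :
    StrictMonoOn (fun t : ℝ => Real.exp t - 2 * (Real.exp t - 1) / t) (Set.Ioi 0) := by
  refine strictMonoOn_of_hasDerivWithinAt_pos (convex_Ioi 0)
    (f' := fun t => (Real.exp t * (t ^ 2 - 2 * t + 2) - 2) / t ^ 2)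
    (fun t ht => ?_) (fun t ht => ?_) (fun t ht => ?_)
  · exact (hasDerivAt_exp_sub_two_mul_exp_sub_one_div
      (Set.mem_Ioi.1 ht).ne').continuousAt.continuousWithinAt
  · rw [interior_Ioi] at ht
    exact (hasDerivAt_exp_sub_two_mul_exp_sub_one_div (Set.mem_Ioi.1 ht).ne').hasDerivWithinAt
  · rw [interior_Ioi] at ht
    exact div_pos (sub_pos.2 (two_lt_exp_mul_sq_sub_two_mul_add_two ht)) (pow_pos ht 2)

lemma strictAntiOn_log_one_div : StrictAntiOn (fun p : ℝ => Real.log (1 / p)) (Set.Ioi 0) :=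
  fun _ hp _ hq hpq =>
    Real.log_lt_log (one_div_pos.2 hq) (one_div_lt_one_div_of_lt hp hpq)

lemma kappa_eq_exp_log_one_div {p : ℝ} (hp : 0 < p) :
    1 / p - 2 * (1 - p) / (p * Real.log (1 / p)) =
      Real.exp (Real.log (1 / p)) -
        2 * (Real.exp (Real.log (1 / p)) - 1) / Real.log (1 / p) := by
  have two_mul_one_sub_div : 2 * (1 - p) / p = 2 * (1 / p - 1) := by field_simp
  rw [Real.exp_log (one_div_pos.2 hp), ← div_div, two_mul_one_sub_div]

/-- the map `κ(p) = 1/p − 2(1-p)/(p log(1/p))` is strictly decreasing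
on `(0,1)`. -/
theorem kappa_strictAntiOn :
    StrictAntiOn (fun p : ℝ => 1 / p - 2 * (1 - p) / (p * Real.log (1 / p)))
      (Set.Ioo 0 1) := by
  have log_mapsTo : Set.MapsTo (fun p : ℝ => Real.log (1 / p)) (Set.Ioo 0 1) (Set.Ioi 0) :=
    fun p hp => Real.log_pos (one_lt_one_div hp.1 hp.2)
  have log_antitone : StrictAntiOn (fun p : ℝ => Real.log (1 / p)) (Set.Ioo 0 1) :=
    strictAntiOn_log_one_div.mono Set.Ioo_subset_Ioi_self
  exact (strictMonoOn_exp_sub_two_mul_exp_sub_one_div.comp_strictAntiOn log_antitone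
    log_mapsTo).congr fun p hp => (kappa_eq_exp_log_one_div hp.1).symm
end

section
/- For every γ ≥ 0 and every u ∈ (0, 1/3], one has φ_γ(u) ≥ φ_γ((1-u)/2). -/
/-- `φ_γ(p) = p (1-p)^(γ-1) (γ log(1/p) + (1-p)/p)`. -/
noncomputable def phiGamma (γ p : ℝ) : ℝ :=
  p * (1 - p) ^ (γ - 1) * (γ * Real.log (1 / p) + (1 - p) / p)

/-!
Write `G p` for the derivative of `γ ↦ φ_γ(p)` at `γ = 0`. Since
`φ_γ(p) = (1 - p) ^ γ * (1 + γ * (G p - log (1 - p)))`, the inequality `1 + x ≤ exp x` turns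
`p ≤ q` and `G q ≤ G p` into `φ_γ(q) ≤ φ_γ(p)` for all `γ ≥ 0` at once. For `p = u` and
`q = (1 - u) / 2` the difference `G p - G q` is `u / (1 + u)` times a sum of antitone functions
of `u`, which vanishes at the fixed point `u = 1 / 3` of `u ↦ (1 - u) / 2`.
-/

open Real Set

theorem antitoneOn_log_one_sub_div :
    AntitoneOn (fun x : ℝ ↦ log (1 - x) / x) (Iio 1 \ {0}) := by
  rintro x ⟨hx₁, hx₀⟩ y ⟨hy₁, hy₀⟩ hxy
  have hslope : slope log 1 (1 - x) ≤ slope log 1 (1 - y) :=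
    strictConcaveOn_log_Ioi.concaveOn.slope_anti (mem_Ioi.2 one_pos)
      ⟨mem_Ioi.2 (sub_pos.2 hy₁), by simpa using hy₀⟩
      ⟨mem_Ioi.2 (sub_pos.2 hx₁), by simpa using hx₀⟩ (sub_le_sub_left hxy 1)
  simpa [slope_def_field, div_neg] using hslope

theorem monotoneOn_one_add_mul_log_one_add_div :
    MonotoneOn (fun x : ℝ ↦ (1 + x) * log (1 + x) / x) (Ici (-1) \ {0}) := by
  rintro x ⟨hx₁, hx₀⟩ y ⟨hy₁, hy₀⟩ hxy
  have hslope : slope (fun z : ℝ ↦ z * log z) 1 (1 + x) ≤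
      slope (fun z : ℝ ↦ z * log z) 1 (1 + y) :=
    convexOn_mul_log.slope_mono (mem_Ici.2 zero_le_one)
      ⟨mem_Ici.2 (neg_le_iff_add_nonneg'.1 hx₁), by simpa using hx₀⟩
      ⟨mem_Ici.2 (neg_le_iff_add_nonneg'.1 hy₁), by simpa using hy₀⟩ (add_le_add_right hxy 1)
  simpa [slope_def_field] using hslope

theorem hasDerivAt_one_add_div_one_sub_mul_neg_log {x : ℝ} (hx₀ : x ≠ 0) (hx₁ : x ≠ 1) :
    HasDerivAt (fun x ↦ (1 + x) / (1 - x) * -log x)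
      (2 / (1 - x) ^ 2 * ((x - x⁻¹) / 2 - log x)) x := by
  have h1x : 1 - x ≠ 0 := sub_ne_zero.2 hx₁.symm
  refine ((((hasDerivAt_id x).const_add 1).div ((hasDerivAt_id x).const_sub 1) h1x).mul
    (hasDerivAt_log hx₀).neg).congr_deriv ?_
  simp only [id, Pi.div_apply, Pi.neg_apply]
  field_simp
  ring

theorem antitoneOn_one_add_div_one_sub_mul_neg_log :
    AntitoneOn (fun x : ℝ ↦ (1 + x) / (1 - x) * -log x) (Ioo 0 1) := by
  have hderiv (x : ℝ) (hx : x ∈ Ioo 0 1) :=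
    hasDerivAt_one_add_div_one_sub_mul_neg_log hx.1.ne' hx.2.ne
  refine antitoneOn_of_hasDerivWithinAt_nonpos (convex_Ioo 0 1)
    (fun x hx ↦ (hderiv x hx).continuousAt.continuousWithinAt)
    (fun x hx ↦ (hderiv x (interior_subset hx)).hasDerivWithinAt) fun x hx ↦ ?_
  obtain ⟨hx₀, hx₁⟩ := interior_subset hx
  have hsinh : (x - x⁻¹) / 2 ≤ log x := by
    rw [← sinh_log hx₀, sinh_le_self_iff]
    exact log_nonpos hx₀.le hx₁.le
  exact mul_nonpos_of_nonneg_of_nonpos (by positivity) (sub_nonpos.2 hsinh)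

/-- The derivative of `γ ↦ phiGamma γ p` at `γ = 0`, for `p ∈ (0, 1)`, in closed form. It
reduces inequalities between values of `phiGamma γ` for all `γ ≥ 0` to one free of `γ`. -/
noncomputable def phiGammaSlope (p : ℝ) : ℝ :=
  p / (1 - p) * -log p + log (1 - p)

theorem phiGamma_eq_rpow_mul {p : ℝ} (hp₀ : p ≠ 0) (hp₁ : p ≠ 1) (γ : ℝ) :
    phiGamma γ p = (1 - p) ^ γ * (1 + γ * (phiGammaSlope p - log (1 - p))) := by
  have h1p : 1 - p ≠ 0 := sub_ne_zero.2 hp₁.symm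
  rw [phiGamma, phiGammaSlope, rpow_sub_one h1p, one_div, log_inv]
  field_simp
  ring

theorem log_one_sub_le_phiGammaSlope {p : ℝ} (hp₀ : 0 ≤ p) (hp₁ : p < 1) :
    log (1 - p) ≤ phiGammaSlope p :=
  le_add_of_nonneg_left <|
    mul_nonneg (div_nonneg hp₀ (sub_pos.2 hp₁).le) (neg_nonneg.2 (log_nonpos hp₀ hp₁.le))

theorem phiGamma_le_phiGamma_of_phiGammaSlope_le {γ p q : ℝ} (hγ : 0 ≤ γ) (hp : 0 < p)
    (hpq : p ≤ q) (hq : q < 1) (hslope : phiGammaSlope q ≤ phiGammaSlope p) :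
    phiGamma γ q ≤ phiGamma γ p := by
  have h1q : 0 < 1 - q := sub_pos.2 hq
  have h1p : 0 < 1 - p := by linarith
  rw [phiGamma_eq_rpow_mul (hp.trans_le hpq).ne' hq.ne,
    phiGamma_eq_rpow_mul hp.ne' (hpq.trans_lt hq).ne]
  set r := log (1 - p) - log (1 - q) with hr
  set A := phiGammaSlope p - log (1 - p)
  have hr₀ : 0 ≤ r := sub_nonneg.2 (log_le_log h1q (by linarith))
  have hA₀ : 0 ≤ A := sub_nonneg.2 (log_one_sub_le_phiGammaSlope hp.le (hpq.trans_lt hq))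
  have hrpow : (1 - q) ^ γ * exp (γ * r) = (1 - p) ^ γ := by
    rw [rpow_def_of_pos h1q, rpow_def_of_pos h1p, ← exp_add, hr]
    ring_nf
  calc (1 - q) ^ γ * (1 + γ * (phiGammaSlope q - log (1 - q)))
      ≤ (1 - q) ^ γ * (1 + γ * (r + A)) := by
        gcongr
        linarith
    _ ≤ (1 - q) ^ γ * ((γ * r + 1) * (1 + γ * A)) := by
        gcongr
        nlinarith [mul_nonneg (mul_nonneg hγ hr₀) (mul_nonneg hγ hA₀)]
    _ ≤ (1 - q) ^ γ * (exp (γ * r) * (1 + γ * A)) := by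
        gcongr
        exact add_one_le_exp _
    _ = (1 - p) ^ γ * (1 + γ * A) := by rw [← mul_assoc, hrpow]

/-- The difference `phiGammaSlope u - phiGammaSlope ((1 - u) / 2)` divided by `u / (1 + u)`,
expanded into terms that are each antitone in `u` on `(0, 1)`. -/
noncomputable def midpointSlopeGap (u : ℝ) : ℝ :=
  2 * (log (1 - u) / u) - (1 + u) * log (1 + u) / u + (1 + u) / (1 - u) * -log u + 2 * log 2

theorem phiGammaSlope_sub_phiGammaSlope_midpoint {u : ℝ} (hu : u ∈ Ioo 0 1) :
    phiGammaSlope u - phiGammaSlope ((1 - u) / 2) = u / (1 + u) * midpointSlopeGap u := by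
  have hu₀ : u ≠ 0 := hu.1.ne'
  have hsub : 1 - u ≠ 0 := (sub_pos.2 hu.2).ne'
  have hadd : 1 + u ≠ 0 := (add_pos one_pos hu.1).ne'
  have hmid : 1 - (1 - u) / 2 = (1 + u) / 2 := by ring
  rw [phiGammaSlope, phiGammaSlope, midpointSlopeGap, hmid, log_div hsub two_ne_zero,
    log_div hadd two_ne_zero]
  field_simp
  ring

theorem antitoneOn_midpointSlopeGap : AntitoneOn midpointSlopeGap (Ioo 0 1) := by
  intro x hx y hy hxy
  have hlog := antitoneOn_log_one_sub_div ⟨hx.2, hx.1.ne'⟩ ⟨hy.2, hy.1.ne'⟩ hxy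
  have hmul_log := monotoneOn_one_add_mul_log_one_add_div
    ⟨neg_one_lt_zero.le.trans hx.1.le, hx.1.ne'⟩ ⟨neg_one_lt_zero.le.trans hy.1.le, hy.1.ne'⟩ hxy
  have hneg_log := antitoneOn_one_add_div_one_sub_mul_neg_log hx hy hxy
  simp only [midpointSlopeGap] at hlog hmul_log hneg_log ⊢
  linarith

theorem midpointSlopeGap_one_third : midpointSlopeGap (1 / 3) = 0 := by
  have hgap := phiGammaSlope_sub_phiGammaSlope_midpoint (u := 1 / 3) (by norm_num)
  have hfixed : (1 - 1 / 3) / 2 = (1 / 3 : ℝ) := by norm_num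
  rw [hfixed, sub_self] at hgap
  exact (mul_eq_zero.1 hgap.symm).resolve_left (by norm_num)

theorem phiGammaSlope_midpoint_le {u : ℝ} (hu : u ∈ Ioc 0 (1 / 3)) :
    phiGammaSlope ((1 - u) / 2) ≤ phiGammaSlope u := by
  obtain ⟨hu₀, hu₁⟩ := hu
  have hmem : u ∈ Ioo (0 : ℝ) 1 := ⟨hu₀, by linarith⟩
  have hgap : 0 ≤ midpointSlopeGap u :=
    midpointSlopeGap_one_third ▸ antitoneOn_midpointSlopeGap hmem (by norm_num) hu₁
  rw [← sub_nonneg, phiGammaSlope_sub_phiGammaSlope_midpoint hmem]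
  positivity

/-- for every `γ ≥ 0` and every `u ∈ (0, 1/3]`,
`φ_γ(u) ≥ φ_γ((1-u)/2)`. -/
theorem phiGamma_ge_phiGamma_midpoint (γ : ℝ) (hγ : 0 ≤ γ)
    (u : ℝ) (hu : u ∈ Set.Ioc (0 : ℝ) (1 / 3)) :
    phiGamma γ ((1 - u) / 2) ≤ phiGamma γ u :=
  phiGamma_le_phiGamma_of_phiGammaSlope_le hγ hu.1 (by linarith [hu.2]) (by linarith [hu.1])
    (phiGammaSlope_midpoint_le hu)
end

section
/- Let S be a nonempty finite set, P : S → ℝ with P(x) > 0 for all x ∈ S and ∑_{x∈S} P(x) = 1, and Q : S → ℝ with 0 < Q(x) ≤ 1 for all x ∈ S. Then (H_γ(P,Q))^(1/γ) tends to max_{x∈S} (1 − Q(x)) as γ → ∞. -/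
/-! For nonnegative `w`, `a`, and `M` the largest `a i`, attained at `i₀`, the sum `∑ w i * a i ^ p`
lies between `w i₀ * M ^ p` and `(∑ w i) * M ^ p`. When `w i₀ > 0`, the `p`-th root of either bound
tends to `M`. The focal entropy has this shape with weights `P x * log (1 / Q x)`, which vanish only
where `1 - Q x` does. -/

open Filter Topology

theorem tendsto_const_rpow_one_div_atTop {c : ℝ} (hc : c ≠ 0) :
    Tendsto (fun p : ℝ => c ^ (1 / p)) atTop (𝓝 1) := by
  simpa only [one_div, Real.rpow_zero, Function.comp_def] using
    ((Real.continuous_const_rpow hc).tendsto 0).comp tendsto_inv_atTop_zero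

theorem tendsto_const_mul_rpow_rpow_one_div_atTop {c M : ℝ} (hc : 0 < c) (hM : 0 ≤ M) :
    Tendsto (fun p : ℝ => (c * M ^ p) ^ (1 / p)) atTop (𝓝 M) := by
  have hlim : Tendsto (fun p : ℝ => c ^ (1 / p) * M) atTop (𝓝 M) := by
    simpa only [one_mul] using (tendsto_const_rpow_one_div_atTop hc.ne').mul_const M
  refine hlim.congr' ?_
  filter_upwards [eventually_ne_atTop 0] with p hp
  rw [Real.mul_rpow hc.le (Real.rpow_nonneg hM p), one_div, Real.rpow_rpow_inv hM hp]

section WeightedPowerSum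

variable {ι : Type*} {s : Finset ι} {w a : ι → ℝ}

theorem tendsto_sum_mul_rpow_rpow_one_div_of_isMaxOn {i₀ : ι} (hi₀ : i₀ ∈ s)
    (hmax : IsMaxOn a s i₀) (hw : ∀ i ∈ s, 0 ≤ w i) (hw₀ : 0 < w i₀) (ha : ∀ i ∈ s, 0 ≤ a i) :
    Tendsto (fun p : ℝ => (∑ i ∈ s, w i * a i ^ p) ^ (1 / p)) atTop (𝓝 (a i₀)) := by
  have hterm (p : ℝ) : ∀ i ∈ s, 0 ≤ w i * a i ^ p := fun i hi =>
    mul_nonneg (hw i hi) (Real.rpow_nonneg (ha i hi) p)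
  have hlower (p : ℝ) : w i₀ * a i₀ ^ p ≤ ∑ i ∈ s, w i * a i ^ p :=
    Finset.single_le_sum (hterm p) hi₀
  have hupper {p : ℝ} (hp : 0 ≤ p) : ∑ i ∈ s, w i * a i ^ p ≤ (∑ i ∈ s, w i) * a i₀ ^ p := by
    rw [Finset.sum_mul]
    exact Finset.sum_le_sum fun i hi =>
      mul_le_mul_of_nonneg_left (Real.rpow_le_rpow (ha i hi) (hmax hi) hp) (hw i hi)
  have hsum : 0 < ∑ i ∈ s, w i := Finset.sum_pos' hw ⟨i₀, hi₀, hw₀⟩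
  refine tendsto_of_tendsto_of_tendsto_of_le_of_le'
    (tendsto_const_mul_rpow_rpow_one_div_atTop hw₀ (ha i₀ hi₀))
    (tendsto_const_mul_rpow_rpow_one_div_atTop hsum (ha i₀ hi₀)) ?_ ?_
  · filter_upwards [eventually_ge_atTop 0] with p hp
    exact Real.rpow_le_rpow (hterm p i₀ hi₀) (hlower p) (one_div_nonneg.mpr hp)
  · filter_upwards [eventually_ge_atTop 0] with p hp
    exact Real.rpow_le_rpow (Finset.sum_nonneg (hterm p)) (hupper hp) (one_div_nonneg.mpr hp)

theorem tendsto_sum_mul_rpow_rpow_one_div_of_eq_zero (ha : ∀ i ∈ s, a i = 0) :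
    Tendsto (fun p : ℝ => (∑ i ∈ s, w i * a i ^ p) ^ (1 / p)) atTop (𝓝 0) := by
  refine tendsto_const_nhds.congr' ?_
  filter_upwards [eventually_ne_atTop 0] with p hp
  have hsum : ∑ i ∈ s, w i * a i ^ p = 0 := Finset.sum_eq_zero fun i hi => by
    rw [ha i hi, Real.zero_rpow hp, mul_zero]
  rw [hsum, Real.zero_rpow (one_div_ne_zero hp)]

theorem tendsto_sum_mul_rpow_rpow_one_div_sup' (hs : s.Nonempty) (hw : ∀ i ∈ s, 0 ≤ w i)
    (ha : ∀ i ∈ s, 0 ≤ a i) (hwa : ∀ i ∈ s, 0 < a i → 0 < w i) :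
    Tendsto (fun p : ℝ => (∑ i ∈ s, w i * a i ^ p) ^ (1 / p)) atTop (𝓝 (s.sup' hs a)) := by
  obtain ⟨i₀, hi₀, hsup⟩ := s.exists_mem_eq_sup' hs a
  have hmax : IsMaxOn a s i₀ := fun i hi => hsup ▸ s.le_sup' a hi
  rw [hsup]
  rcases (ha i₀ hi₀).eq_or_lt with hzero | hpos
  · rw [← hzero]
    exact tendsto_sum_mul_rpow_rpow_one_div_of_eq_zero fun i hi =>
      le_antisymm ((hmax hi).trans_eq hzero.symm) (ha i hi)
  · exact tendsto_sum_mul_rpow_rpow_one_div_of_isMaxOn hi₀ hmax hw (hwa i₀ hi₀ hpos) ha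

end WeightedPowerSum

theorem focalEntropy_rpow_inv_gamma_tendsto_max_general {ι : Type*} {s : Finset ι}
    (hs : s.Nonempty) {P Q : ι → ℝ} (hP : ∀ x ∈ s, 0 < P x) (hQ : ∀ x ∈ s, 0 < Q x ∧ Q x ≤ 1) :
    Tendsto (fun γ : ℝ => (∑ x ∈ s, P x * (1 - Q x) ^ γ * Real.log (1 / Q x)) ^ (1 / γ))
      atTop (𝓝 (s.sup' hs fun x => 1 - Q x)) := by
  simp only [mul_right_comm (P _) _ (Real.log _)]
  refine tendsto_sum_mul_rpow_rpow_one_div_sup' hs (fun x hx => ?_)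
    (fun x hx => sub_nonneg.mpr (hQ x hx).2) (fun x hx hlt => ?_)
  · exact mul_nonneg (hP x hx).le (Real.log_nonneg (one_le_one_div (hQ x hx).1 (hQ x hx).2))
  · exact mul_pos (hP x hx) (Real.log_pos (one_lt_one_div (hQ x hx).1 (sub_pos.mp hlt)))

/-- for a nonempty finite set (the index type `ι`), a probability
vector `P` with full support, and `Q` with `0 < Q x ≤ 1`, the quantity
`(H_γ(P,Q))^(1/γ)` tends to `max_x (1 - Q x)` as `γ → ∞`. -/
theorem focalEntropy_rpow_inv_gamma_tendsto_max
    {ι : Type*} [Fintype ι] [Nonempty ι] (P Q : ι → ℝ)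
    (hP : ∀ x, 0 < P x) (hPsum : ∑ x, P x = 1)
    (hQ : ∀ x, 0 < Q x ∧ Q x ≤ 1) :
    Filter.Tendsto
      (fun γ : ℝ => (∑ x, P x * (1 - Q x) ^ γ * Real.log (1 / Q x)) ^ (1 / γ))
      Filter.atTop
      (nhds (Finset.univ.sup' Finset.univ_nonempty (fun x => 1 - Q x))) :=
  focalEntropy_rpow_inv_gamma_tendsto_max_general Finset.univ_nonempty (fun x _ => hP x)
    fun x _ => hQ x
end

section
/- Let γ ≥ 0, let S be a finite set with |S| ≥ 2, and let P : S → ℝ satisfy P(x) > 0 for all x ∈ S and ∑_{x∈S} P(x) = 1. Then there exists a unique α > 0 for which there exists a function Q* : S → ℝ with 0 < Q*(x) < 1 and L'_γ(Q*(x)) = -α/P(x) for all x ∈ S, and ∑_{x∈S} Q*(x) = 1; moreover, for this α the function Q* is unique. -/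
/-- The closed form of the first derivative of the focal-loss,
`L'_γ(p) = -(1-p)^(γ-1) (γ log(1/p) + (1-p)/p)`. -/
noncomputable def focalLossDeriv (γ p : ℝ) : ℝ :=
  -((1 - p) ^ (γ - 1) * (γ * Real.log (1 / p) + (1 - p) / p))

/-!
Let `x₀` be a point of largest weight and parametrize the candidate solutions by `q = Q x₀`: the
stationarity conditions then read `L' (Q x) = (P x₀ / P x) * L' q`. Since `L'` is negative and tends
to `-∞` at `0`, and `P x₀ / P x ≥ 1`, this equation has a solution `Q x = r x q ∈ (0, q]` for every
`q`, whatever the limit of `L'` at `1` is (for `γ = 0` it is `-1`, not `0`). The sum `∑ x, r x q` is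
continuous in `q`, at most `1` at `q = 1 / |ι|`, and at least `1` at `q = 1 - r x₁ (1 / 2)` for any
`x₁ ≠ x₀`, because `r x₁` is increasing. The intermediate value theorem gives existence. Uniqueness
holds because increasing `α` decreases every `Q x`.
-/

open Set Filter Topology

section Inverse

variable {X Y : Type*} [LinearOrder X] [TopologicalSpace X] [OrderTopology X]
  [LinearOrder Y] [TopologicalSpace Y] [OrderClosedTopology Y]

theorem continuousOn_image_of_strictMonoOn_of_leftInvOn {f : X → Y} {g : Y → X} {s : Set X}
    [OrdConnected s] (hf : StrictMonoOn f s) (hg : LeftInvOn g f s) : ContinuousOn g (f '' s) := by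
  let e : s ≃o f '' s := hf.orderIso f s
  have he : Continuous e.symm := by
    rw [OrderTopology.topology_eq_generate_intervals (α := s), continuous_generateFrom_iff]
    rintro _ ⟨a, rfl | rfl⟩
    · simpa only [OrderIso.preimage_Ioi] using isOpen_Ioi
    · simpa only [OrderIso.preimage_Iio] using isOpen_Iio
  have hge : (f '' s).domRestrict g = fun y ↦ (e.symm y : X) := by
    funext y
    obtain ⟨x, rfl⟩ := e.surjective y
    rw [e.symm_apply_apply]
    exact hg x.2
  rw [continuousOn_iff_continuous_domRestrict, hge]
  exact continuous_subtype_val.comp he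

end Inverse

section Stationarity

variable {ι : Type*} [Fintype ι] {f : ℝ → ℝ} {P Q Q₁ Q₂ : ι → ℝ} {α α₁ α₂ : ℝ}

/-- `Q` is a probability vector with entries in `(0, 1)` satisfying the first-order conditions, with
Lagrange multiplier `α`, for minimizing `∑ x, P x * L (Q x)` over the simplex, where `f = L'`. -/
def IsSimplexStationary (f : ℝ → ℝ) (P : ι → ℝ) (α : ℝ) (Q : ι → ℝ) : Prop :=
  (∀ x, 0 < Q x ∧ Q x < 1 ∧ f (Q x) = -α / P x) ∧ ∑ x, Q x = 1

namespace IsSimplexStationary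

theorem mem_Ioo (h : IsSimplexStationary f P α Q) (x : ι) : Q x ∈ Ioo 0 1 :=
  ⟨(h.1 x).1, (h.1 x).2.1⟩

theorem apply_eq (h : IsSimplexStationary f P α Q) (x : ι) : f (Q x) = -α / P x :=
  (h.1 x).2.2

theorem sum_eq_one (h : IsSimplexStationary f P α Q) : ∑ x, Q x = 1 :=
  h.2

theorem nonempty (h : IsSimplexStationary f P α Q) : Nonempty ι := by
  by_contra! hempty
  simpa using h.sum_eq_one

theorem eq_of_injOn (hf : InjOn f (Ioo 0 1)) (h₁ : IsSimplexStationary f P α Q₁)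
    (h₂ : IsSimplexStationary f P α Q₂) : Q₁ = Q₂ :=
  funext fun x ↦ hf (h₁.mem_Ioo x) (h₂.mem_Ioo x) ((h₁.apply_eq x).trans (h₂.apply_eq x).symm)

theorem multiplier_pos (hneg : ∀ p ∈ Ioo 0 1, f p < 0) (hP : ∀ x, 0 < P x)
    (h : IsSimplexStationary f P α Q) : 0 < α := by
  obtain ⟨x⟩ := h.nonempty
  have hlt : -α / P x < 0 := h.apply_eq x ▸ hneg _ (h.mem_Ioo x)
  simpa using (div_lt_iff₀ (hP x)).1 hlt

theorem multiplier_le (hf : StrictMonoOn f (Ioo 0 1)) (hP : ∀ x, 0 < P x)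
    (h₁ : IsSimplexStationary f P α₁ Q₁) (h₂ : IsSimplexStationary f P α₂ Q₂) : α₁ ≤ α₂ := by
  by_contra! hα
  have hQ (x : ι) : Q₁ x < Q₂ x := by
    rw [← hf.lt_iff_lt (h₁.mem_Ioo x) (h₂.mem_Ioo x), h₁.apply_eq, h₂.apply_eq]
    exact div_lt_div_of_pos_right (neg_lt_neg hα) (hP x)
  have hsum : ∑ x, Q₁ x < ∑ x, Q₂ x :=
    have := h₁.nonempty
    Finset.sum_lt_sum_of_nonempty Finset.univ_nonempty fun x _ ↦ hQ x
  exact hsum.ne (h₁.sum_eq_one.trans h₂.sum_eq_one.symm)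

theorem multiplier_unique (hf : StrictMonoOn f (Ioo 0 1)) (hP : ∀ x, 0 < P x)
    (h₁ : IsSimplexStationary f P α₁ Q₁) (h₂ : IsSimplexStationary f P α₂ Q₂) : α₁ = α₂ :=
  (multiplier_le hf hP h₁ h₂).antisymm (multiplier_le hf hP h₂ h₁)

end IsSimplexStationary

theorem exists_monotoneOn_continuousOn_map_eq_mul (hmono : StrictMonoOn f (Ioo 0 1))
    (hcont : ContinuousOn f (Ioo 0 1)) (hneg : ∀ p ∈ Ioo 0 1, f p < 0)
    (hbot : Tendsto f (𝓝[>] 0) atBot) {c : ℝ} (hc : 1 ≤ c) :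
    ∃ r : ℝ → ℝ, MonotoneOn r (Ioo 0 1) ∧ ContinuousOn r (Ioo 0 1) ∧
      ∀ q ∈ Ioo 0 1, r q ∈ Ioc 0 q ∧ f (r q) = c * f q := by
  have hle : ∀ q ∈ Ioo 0 1, c * f q ≤ f q := fun q hq ↦
    mul_le_of_one_le_left (hneg q hq).le hc
  have himage : MapsTo (fun q ↦ c * f q) (Ioo 0 1) (f '' Ioo 0 1) := fun q hq ↦
    isPreconnected_Ioo.intermediate_value_Iic hq (le_principal_iff.2 (Ioo_mem_nhdsGT one_pos))
      hcont hbot (hle q hq)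
  let r : ℝ → ℝ := fun q ↦ Function.invFunOn f (Ioo 0 1) (c * f q)
  have hr_mem : ∀ q ∈ Ioo 0 1, r q ∈ Ioo 0 1 := fun q hq ↦ Function.invFunOn_mem (himage hq)
  have hr_eq : ∀ q ∈ Ioo 0 1, f (r q) = c * f q := fun q hq ↦ Function.invFunOn_eq (himage hq)
  refine ⟨r, fun p hp q hq hpq ↦ ?_, ?_, fun q hq ↦ ⟨⟨(hr_mem q hq).1, ?_⟩, hr_eq q hq⟩⟩
  · rw [← hmono.le_iff_le (hr_mem p hp) (hr_mem q hq), hr_eq p hp, hr_eq q hq]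
    exact mul_le_mul_of_nonneg_left (hmono.monotoneOn hp hq hpq) (zero_le_one.trans hc)
  · exact (continuousOn_image_of_strictMonoOn_of_leftInvOn hmono
      hmono.injOn.leftInvOn_invFunOn).comp (continuousOn_const.mul hcont) himage
  · rw [← hmono.le_iff_le (hr_mem q hq) hq, hr_eq q hq]
    exact hle q hq

theorem exists_sum_eq_one_of_mem_Ioc [Nontrivial ι] {r : ι → ℝ → ℝ} {x₀ : ι}
    (hmono : ∀ x, MonotoneOn (r x) (Ioo 0 1)) (hcont : ∀ x, ContinuousOn (r x) (Ioo 0 1))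
    (hmem : ∀ x, ∀ q ∈ Ioo 0 1, r x q ∈ Ioc 0 q) (hx₀ : ∀ q ∈ Ioo 0 1, r x₀ q = q) :
    ∃ q ∈ Ioo 0 1, ∑ x, r x q = 1 := by
  have hcard : (1 : ℝ) < Fintype.card ι := by exact_mod_cast Fintype.one_lt_card
  have huniform : (Fintype.card ι : ℝ)⁻¹ ∈ Ioo 0 1 := ⟨by positivity, inv_lt_one_of_one_lt₀ hcard⟩
  have hle : ∑ x, r x (Fintype.card ι : ℝ)⁻¹ ≤ 1 := calc
    ∑ x, r x (Fintype.card ι : ℝ)⁻¹ ≤ ∑ _x : ι, (Fintype.card ι : ℝ)⁻¹ :=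
      Finset.sum_le_sum fun x _ ↦ (hmem x _ huniform).2
    _ = 1 := by simp
  obtain ⟨x₁, hx₁⟩ := exists_ne x₀
  have hhalf : (1 / 2 : ℝ) ∈ Ioo 0 1 := by norm_num
  obtain ⟨hδ_pos, hδ_le⟩ := hmem x₁ _ hhalf
  set δ := r x₁ (1 / 2)
  have hδ : 1 - δ ∈ Ioo 0 1 := ⟨by linarith, by linarith⟩
  have hge : 1 ≤ ∑ x, r x (1 - δ) := calc
    1 = (1 - δ) + δ := by ring
    _ ≤ r x₀ (1 - δ) + r x₁ (1 - δ) :=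
      add_le_add (hx₀ _ hδ).ge (hmono x₁ hhalf hδ (by linarith))
    _ ≤ ∑ x, r x (1 - δ) :=
      Finset.add_le_sum (fun x _ ↦ (hmem x _ hδ).1.le) (Finset.mem_univ x₀) (Finset.mem_univ x₁)
        hx₁.symm
  exact isPreconnected_Ioo.intermediate_value huniform hδ
    (continuousOn_finsetSum _ fun x _ ↦ hcont x) ⟨hle, hge⟩

theorem exists_isSimplexStationary [Nontrivial ι] (hmono : StrictMonoOn f (Ioo 0 1))
    (hcont : ContinuousOn f (Ioo 0 1)) (hneg : ∀ p ∈ Ioo 0 1, f p < 0)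
    (hbot : Tendsto f (𝓝[>] 0) atBot) (hP : ∀ x, 0 < P x) : ∃ α Q, IsSimplexStationary f P α Q := by
  obtain ⟨x₀, hx₀⟩ := Finite.exists_max P
  have hratio (x : ι) : 1 ≤ P x₀ / P x := (one_le_div (hP x)).2 (hx₀ x)
  choose r hr_mono hr_cont hr using fun x ↦
    exists_monotoneOn_continuousOn_map_eq_mul hmono hcont hneg hbot (hratio x)
  have hr_max : ∀ q ∈ Ioo 0 1, r x₀ q = q := by
    intro q hq
    obtain ⟨hmem, heq⟩ := hr x₀ q hq
    rw [div_self (hP x₀).ne', one_mul] at heq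
    exact hmono.injOn ⟨hmem.1, hmem.2.trans_lt hq.2⟩ hq heq
  obtain ⟨q, hq, hsum⟩ :=
    exists_sum_eq_one_of_mem_Ioc hr_mono hr_cont (fun x q hq ↦ (hr x q hq).1) hr_max
  refine ⟨-(P x₀ * f q), fun x ↦ r x q, fun x ↦ ?_, hsum⟩
  obtain ⟨hmem, heq⟩ := hr x q hq
  exact ⟨hmem.1, hmem.2.trans_lt hq.2, by rw [heq, neg_neg, div_mul_eq_mul_div]⟩

theorem focalEntropy_minimizer_exists_unique_general [Nontrivial ι]
    (hmono : StrictMonoOn f (Ioo 0 1)) (hcont : ContinuousOn f (Ioo 0 1))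
    (hneg : ∀ p ∈ Ioo 0 1, f p < 0) (hbot : Tendsto f (𝓝[>] 0) atBot) (hP : ∀ x, 0 < P x) :
    (∃! α : ℝ, 0 < α ∧ ∃ Q, IsSimplexStationary f P α Q) ∧
      ∀ α Q₁ Q₂, IsSimplexStationary f P α Q₁ → IsSimplexStationary f P α Q₂ → Q₁ = Q₂ := by
  obtain ⟨α, Q, hQ⟩ := exists_isSimplexStationary hmono hcont hneg hbot hP
  refine ⟨⟨α, ⟨hQ.multiplier_pos hneg hP, Q, hQ⟩, ?_⟩, fun _ _ _ ↦
    IsSimplexStationary.eq_of_injOn hmono.injOn⟩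
  rintro β ⟨_, R, hR⟩
  exact hR.multiplier_unique hmono hP hQ

end Stationarity

section FocalLoss

variable {γ p : ℝ}

theorem antitoneOn_slope_log_one : AntitoneOn (slope Real.log 1) (Ioi 0 \ {1}) :=
  strictConcaveOn_log_Ioi.concaveOn.slope_anti (mem_Ioi.2 one_pos)

theorem slope_log_one_pos (hp₀ : 0 < p) (hp₁ : p ≠ 1) : 0 < slope Real.log 1 p :=
  Real.strictMonoOn_log.slope_pos (mem_Ioi.2 one_pos) hp₀ hp₁.symm

theorem focalLossDeriv_eq_slope_log (hp : p ∈ Ioo 0 1) :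
    focalLossDeriv γ p = -((1 - p) ^ γ * (γ * slope Real.log 1 p + p⁻¹)) := by
  have hp₀ : p ≠ 0 := hp.1.ne'
  have hp₁ : 1 - p ≠ 0 := (sub_pos.2 hp.2).ne'
  have hp₁' : p - 1 ≠ 0 := (sub_neg.2 hp.2).ne
  rw [focalLossDeriv, Real.rpow_sub_one hp₁, one_div, Real.log_inv, slope_def_field, Real.log_one]
  field_simp
  ring

theorem focalLossDeriv_neg (hγ : 0 ≤ γ) (hp : p ∈ Ioo 0 1) : focalLossDeriv γ p < 0 := by
  have hslope := slope_log_one_pos hp.1 hp.2.ne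
  have hp₀ : 0 < p := hp.1
  have hp₁ : 0 < 1 - p := sub_pos.2 hp.2
  rw [focalLossDeriv_eq_slope_log hp, neg_lt_zero]
  positivity

theorem strictMonoOn_focalLossDeriv (hγ : 0 ≤ γ) : StrictMonoOn (focalLossDeriv γ) (Ioo 0 1) := by
  intro p hp q hq hpq
  rw [focalLossDeriv_eq_slope_log hp, focalLossDeriv_eq_slope_log hq, neg_lt_neg_iff]
  have hp₁ : 0 < 1 - p := sub_pos.2 hp.2
  have hq₀ : 0 < q := hq.1
  have hq₁ : 0 < 1 - q := sub_pos.2 hq.2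
  have hslope : 0 < slope Real.log 1 q := slope_log_one_pos hq.1 hq.2.ne
  have hpow : (1 - q) ^ γ ≤ (1 - p) ^ γ :=
    Real.rpow_le_rpow hq₁.le (sub_le_sub_left hpq.le 1) hγ
  have hfactor : γ * slope Real.log 1 q + q⁻¹ < γ * slope Real.log 1 p + p⁻¹ :=
    add_lt_add_of_le_of_lt
      (mul_le_mul_of_nonneg_left
        (antitoneOn_slope_log_one ⟨hp.1, hp.2.ne⟩ ⟨hq.1, hq.2.ne⟩ hpq.le) hγ)
      (inv_strictAnti₀ hp.1 hpq)
  exact mul_lt_mul' hpow hfactor (by positivity) (by positivity)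

theorem continuousOn_focalLossDeriv : ContinuousOn (focalLossDeriv γ) (Ioo 0 1) := by
  intro p hp
  have hp₀ : p ≠ 0 := hp.1.ne'
  have hp₁ : 1 - p ≠ 0 := (sub_pos.2 hp.2).ne'
  unfold focalLossDeriv
  fun_prop (disch := simp [*])

theorem tendsto_focalLossDeriv_nhdsGT_zero (hγ : 0 ≤ γ) :
    Tendsto (focalLossDeriv γ) (𝓝[>] 0) atBot := by
  have hmem : ∀ᶠ p : ℝ in 𝓝[>] 0, p ∈ Ioo 0 1 := Ioo_mem_nhdsGT one_pos
  have hpow : Tendsto (fun p : ℝ ↦ (1 - p) ^ γ) (𝓝[>] 0) (𝓝 1) := by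
    have hcont : ContinuousAt (fun p : ℝ ↦ (1 - p) ^ γ) 0 := by fun_prop (disch := simp)
    simpa using hcont.tendsto.mono_left nhdsWithin_le_nhds
  have hfactor : Tendsto (fun p ↦ γ * slope Real.log 1 p + p⁻¹) (𝓝[>] 0) atTop :=
    Tendsto.zero_eventuallyLE_add_atTop
      (hmem.mono fun p hp ↦ mul_nonneg hγ (slope_log_one_pos hp.1 hp.2.ne).le)
      tendsto_inv_nhdsGT_zero
  exact (tendsto_neg_atTop_atBot.comp (hpow.pos_mul_atTop one_pos hfactor)).congr'
    (hmem.mono fun p hp ↦ (focalLossDeriv_eq_slope_log hp).symm)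

end FocalLoss

/-- existence and uniqueness of `α > 0` such that the first-order
stationarity conditions `L'_γ(Q* x) = -α / P x` admit a probability vector solution
`Q*` with `0 < Q* x < 1`; moreover for this `α` the solution `Q*` is unique. -/
theorem focalEntropy_minimizer_exists_unique
    {ι : Type*} [Fintype ι] (hcard : 2 ≤ Fintype.card ι)
    (γ : ℝ) (hγ : 0 ≤ γ)
    (P : ι → ℝ) (hP : ∀ x, 0 < P x) (hPsum : ∑ x, P x = 1) :
    (∃! α : ℝ, 0 < α ∧ ∃ Q : ι → ℝ,
      (∀ x, 0 < Q x ∧ Q x < 1 ∧ focalLossDeriv γ (Q x) = -α / P x) ∧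
      ∑ x, Q x = 1) ∧
    (∀ α : ℝ, 0 < α → ∀ Q₁ Q₂ : ι → ℝ,
      ((∀ x, 0 < Q₁ x ∧ Q₁ x < 1 ∧ focalLossDeriv γ (Q₁ x) = -α / P x) ∧
        ∑ x, Q₁ x = 1) →
      ((∀ x, 0 < Q₂ x ∧ Q₂ x < 1 ∧ focalLossDeriv γ (Q₂ x) = -α / P x) ∧
        ∑ x, Q₂ x = 1) →
      Q₁ = Q₂) := by
  have : Nontrivial ι := Fintype.one_lt_card_iff_nontrivial.1 hcard
  exact (focalEntropy_minimizer_exists_unique_general (strictMonoOn_focalLossDeriv hγ)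
    continuousOn_focalLossDeriv (fun _ ↦ focalLossDeriv_neg hγ)
    (tendsto_focalLossDeriv_nhdsGT_zero hγ) hP).imp_right fun h α _ ↦ h α
end

section
/- Let γ ≥ 0, let S be a finite set with |S| ≥ 2 and N = |S|, and let P : S → ℝ satisfy P(x) > 0 for all x ∈ S and ∑_{x∈S} P(x) = 1. Suppose α > 0 and Q* : S → ℝ satisfy 0 < Q*(x) < 1, L'_γ(Q*(x)) = -α/P(x) for all x ∈ S, and ∑_{x∈S} Q*(x) = 1. Let p_min = min_{x∈S} P(x), p_max = max_{x∈S} P(x), and c = -L'_γ(1/N). Then α ≤ 1 + γ and p_min · c ≤ α ≤ p_max · c. -/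
/-!
The stationarity condition says that `P x * (-L'_γ (Q x))` is the same number `α` for every `x`.
Since `-L'_γ` is nonnegative and antitone on `(0, 1)`, evaluating at a point where `Q` is at most
(resp. at least) its average `1 / N` gives the lower (resp. upper) bound in terms of
`-L'_γ (1 / N)`. Since `p * (-L'_γ p) ≤ 1 + γ`, multiplying by `Q x` and summing gives `α ≤ 1 + γ`.
-/

open Set (Ioi Ioo)

section ConstantProduct

open Finset

theorem mul_sum_le_mul_sum_of_mul_eq {ι R : Type*} [CommSemiring R] [PartialOrder R]
    [IsOrderedRing R] {s : Finset ι} {w q r : ι → R} {a C : R}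
    (hw : ∀ i ∈ s, 0 ≤ w i) (h : ∀ i ∈ s, w i * r i = a) (hC : ∀ i ∈ s, q i * r i ≤ C) :
    a * ∑ i ∈ s, q i ≤ C * ∑ i ∈ s, w i := by
  rw [mul_sum, mul_sum]
  refine sum_le_sum fun i hi ↦ ?_
  calc a * q i = q i * r i * w i := by rw [← h i hi]; ring
    _ ≤ C * w i := mul_le_mul_of_nonneg_right (hC i hi) (hw i hi)

variable {ι M R : Type*} [AddCommMonoid M] [LinearOrder M] [IsOrderedCancelAddMonoid M]
  [Semiring R] [LinearOrder R] [IsOrderedRing R]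
  {s : Finset ι} {t : Set M} {f : M → R} {w : ι → R} {q : ι → M} {a : R} {m : M}

theorem inf'_mul_le_of_sum_le_card_nsmul (hs : s.Nonempty) (hf : AntitoneOn f t)
    (hw : ∀ i ∈ s, 0 ≤ w i) (hq : ∀ i ∈ s, q i ∈ t) (h : ∀ i ∈ s, w i * f (q i) = a)
    (hm : m ∈ t) (hfm : 0 ≤ f m) (hsum : ∑ i ∈ s, q i ≤ #s • m) :
    s.inf' hs w * f m ≤ a := by
  obtain ⟨i, hi, hqi⟩ : ∃ i ∈ s, q i ≤ m := exists_le_of_sum_le hs (by rwa [sum_const])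
  calc s.inf' hs w * f m ≤ w i * f (q i) :=
        mul_le_mul (inf'_le w hi) (hf (hq i hi) hm hqi) hfm (hw i hi)
    _ = a := h i hi

theorem le_sup'_mul_of_card_nsmul_le_sum (hs : s.Nonempty) (hf : AntitoneOn f t)
    (hw : ∀ i ∈ s, 0 ≤ w i) (hq : ∀ i ∈ s, q i ∈ t) (h : ∀ i ∈ s, w i * f (q i) = a)
    (hm : m ∈ t) (hfm : 0 ≤ f m) (hsum : #s • m ≤ ∑ i ∈ s, q i) :
    a ≤ s.sup' hs w * f m := by
  obtain ⟨i, hi, hmi⟩ : ∃ i ∈ s, m ≤ q i := exists_le_of_sum_le hs (by rwa [sum_const])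
  calc a = w i * f (q i) := (h i hi).symm
    _ ≤ w i * f m := mul_le_mul_of_nonneg_left (hf hm (hq i hi) hmi) (hw i hi)
    _ ≤ s.sup' hs w * f m := mul_le_mul_of_nonneg_right (le_sup' w hi) hfm

end ConstantProduct

-- The point `1` is excluded because there `x / 0 = 0` replaces the limit `1` of the secant slopes.
theorem antitoneOn_log_div_sub_one :
    AntitoneOn (fun x : ℝ ↦ Real.log x / (x - 1)) (Ioi 0 \ {1}) := by
  simpa only [slope_fun_def_field, Real.log_one, sub_zero] using
    strictConcaveOn_log_Ioi.concaveOn.slope_anti (Set.mem_Ioi.2 one_pos)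

theorem log_div_sub_one_nonneg {x : ℝ} (hx : 0 ≤ x) : 0 ≤ Real.log x / (x - 1) := by
  rcases le_total x 1 with h | h
  · exact div_nonneg_of_nonpos (Real.log_nonpos hx h) (sub_nonpos.2 h)
  · exact div_nonneg (Real.log_nonneg h) (sub_nonneg.2 h)

theorem log_div_sub_one_le_inv {x : ℝ} (hx₀ : 0 < x) (hx₁ : x < 1) :
    Real.log x / (x - 1) ≤ x⁻¹ := by
  rw [div_le_iff_of_neg (sub_neg.2 hx₁)]
  calc x⁻¹ * (x - 1) = 1 - x⁻¹ := by field_simp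
    _ ≤ Real.log x := Real.one_sub_inv_le_log_of_pos hx₀

section FocalLoss

variable {γ p : ℝ}

theorem neg_focalLossDeriv_eq (γ : ℝ) (hp : p < 1) :
    -focalLossDeriv γ p = (1 - p) ^ γ * (γ * (Real.log p / (p - 1)) + p⁻¹) := by
  have hp' : 1 - p ≠ 0 := (sub_pos.2 hp).ne'
  rw [focalLossDeriv, neg_neg, Real.rpow_sub_one hp', one_div, Real.log_inv, ← neg_sub 1 p]
  field_simp

theorem neg_focalLossDeriv_pos (hγ : 0 ≤ γ) (hp : p ∈ Ioo 0 1) : 0 < -focalLossDeriv γ p := by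
  rw [neg_focalLossDeriv_eq γ hp.2]
  have hslope := log_div_sub_one_nonneg hp.1.le
  have hp₀ : 0 < p := hp.1
  have hp₁ : 0 < 1 - p := sub_pos.2 hp.2
  positivity

theorem antitoneOn_neg_focalLossDeriv (hγ : 0 ≤ γ) :
    AntitoneOn (fun p ↦ -focalLossDeriv γ p) (Ioo 0 1) := by
  intro p hp q hq hpq
  have hslope : Real.log q / (q - 1) ≤ Real.log p / (p - 1) :=
    antitoneOn_log_div_sub_one ⟨hp.1, hp.2.ne⟩ ⟨hq.1, hq.2.ne⟩ hpq
  have hslope₀ : 0 ≤ Real.log q / (q - 1) := log_div_sub_one_nonneg hq.1.le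
  have hp₀ : 0 < p := hp.1
  have hq₀ : 0 < q := hq.1
  have hq₁ : 0 ≤ 1 - q := sub_nonneg.2 hq.2.le
  have hp₁ : 0 ≤ 1 - p := sub_nonneg.2 hp.2.le
  simp only [neg_focalLossDeriv_eq γ hp.2, neg_focalLossDeriv_eq γ hq.2]
  gcongr

theorem mul_neg_focalLossDeriv_le (hγ : 0 ≤ γ) (hp : p ∈ Ioo 0 1) :
    p * -focalLossDeriv γ p ≤ 1 + γ := by
  have hp₀ : 0 < p := hp.1
  have hp₁ : 0 ≤ 1 - p := sub_nonneg.2 hp.2.le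
  calc p * -focalLossDeriv γ p
      = p * ((1 - p) ^ γ * (γ * (Real.log p / (p - 1)) + p⁻¹)) := by
        rw [neg_focalLossDeriv_eq γ hp.2]
    _ ≤ p * ((1 - p) ^ γ * (γ * p⁻¹ + p⁻¹)) := by
        gcongr; exact log_div_sub_one_le_inv hp.1 hp.2
    _ = (1 - p) ^ γ * (1 + γ) := by field_simp; ring
    _ ≤ 1 + γ :=
        mul_le_of_le_one_left (by positivity)
          (Real.rpow_le_one hp₁ (sub_le_self 1 hp.1.le) hγ)

end FocalLoss

/-- bounds on the Lagrange multiplier `α`: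
`α ≤ 1 + γ` and `p_min · c ≤ α ≤ p_max · c` where `c = -L'_γ(1/N)`, `N = |S|`. -/
theorem focalEntropy_multiplier_bounds
    {ι : Type*} [Fintype ι] [Nonempty ι] (hcard : 2 ≤ Fintype.card ι)
    (γ : ℝ) (hγ : 0 ≤ γ)
    (P : ι → ℝ) (hP : ∀ x, 0 < P x) (hPsum : ∑ x, P x = 1)
    (α : ℝ) (hα : 0 < α)
    (Qstar : ι → ℝ)
    (hQstar : ∀ x, 0 < Qstar x ∧ Qstar x < 1 ∧
      focalLossDeriv γ (Qstar x) = -α / P x)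
    (hQstarsum : ∑ x, Qstar x = 1) :
    α ≤ 1 + γ ∧
    (Finset.univ.inf' Finset.univ_nonempty P) *
      (-focalLossDeriv γ (1 / (Fintype.card ι : ℝ))) ≤ α ∧
    α ≤ (Finset.univ.sup' Finset.univ_nonempty P) *
      (-focalLossDeriv γ (1 / (Fintype.card ι : ℝ))) := by
  have hmul : ∀ x ∈ Finset.univ, P x * -focalLossDeriv γ (Qstar x) = α := fun x _ ↦ by
    rw [(hQstar x).2.2, neg_div, neg_neg, mul_div_cancel₀ _ (hP x).ne']
  have hP₀ : ∀ x ∈ Finset.univ, 0 ≤ P x := fun x _ ↦ (hP x).le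
  have hQ : ∀ x ∈ Finset.univ, Qstar x ∈ Ioo 0 1 := fun x _ ↦ ⟨(hQstar x).1, (hQstar x).2.1⟩
  have hmean : 1 / (Fintype.card ι : ℝ) ∈ Ioo 0 1 := by
    have hN : (1 : ℝ) < Fintype.card ι := by exact_mod_cast hcard
    exact ⟨by positivity, (div_lt_one (by positivity)).2 hN⟩
  have hsum : ∑ x, Qstar x = (Finset.univ : Finset ι).card • (1 / (Fintype.card ι : ℝ)) := by
    rw [hQstarsum, nsmul_eq_mul, Finset.card_univ, mul_one_div_cancel (by positivity)]
  have hanti := antitoneOn_neg_focalLossDeriv hγ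
  have hc := (neg_focalLossDeriv_pos hγ hmean).le
  have hone_add : α * ∑ x, Qstar x ≤ (1 + γ) * ∑ x, P x :=
    mul_sum_le_mul_sum_of_mul_eq hP₀ hmul fun x hx ↦ mul_neg_focalLossDeriv_le hγ (hQ x hx)
  have hlower := inf'_mul_le_of_sum_le_card_nsmul Finset.univ_nonempty
    hanti hP₀ hQ hmul hmean hc hsum.le
  have hupper := le_sup'_mul_of_card_nsmul_le_sum Finset.univ_nonempty
    hanti hP₀ hQ hmul hmean hc hsum.ge
  rw [hQstarsum, hPsum, mul_one, mul_one] at hone_add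
  exact ⟨hone_add, hlower, hupper⟩
end

section
/- Let γ > 0 and let S = {x₁, x₂} be a two-element set with P : S → ℝ satisfying P(x₁) > P(x₂) > 0 and P(x₁) + P(x₂) = 1. Suppose α > 0 and Q* : S → ℝ satisfy 0 < Q*(x) < 1, L'_γ(Q*(x)) = -α/P(x) for x ∈ S, and Q*(x₁) + Q*(x₂) = 1. Then Q*(x₁) < P(x₁) and Q*(x₂) > P(x₂); that is, the larger probability is strictly decreased and the smaller probability is strictly increased. -/
/-!
Put `F q = -q L'_γ(q) = (1 - q)^γ + γ (1 - q)^(γ-1) h(q)` with `h(q) = -q log q`. Stationarity reads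
`F(Q x) = α Q(x) / P(x)`, so the odds `Q(x₁) / Q(x₂)` fall below `P(x₁) / P(x₂)` as soon as
`F q < F (1 - q)` for `1/2 < q < 1`. Since `h(q) < h(1 - q)`, replacing `h(q)` by `h(1 - q)` in
`F q` increases it, to the value of `t + h(t)` at `t = (1 - q)^γ`; replacing `h(1 - q)` by `h(q)` in
`F (1 - q)` decreases it, to the value at `t = q^γ`. The former value is the smaller one because
`t + h(t)` has derivative `-log t > 0` on `(0, 1)`.
-/

open Real Set

theorem strictMonoOn_id_add_negMulLog : StrictMonoOn (fun t ↦ t + negMulLog t) (Icc 0 1) := by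
  refine strictMonoOn_of_deriv_pos (convex_Icc 0 1) (by fun_prop) fun t ht ↦ ?_
  rw [interior_Icc] at ht
  have hderiv : HasDerivAt (fun t ↦ t + negMulLog t) (-log t) t :=
    ((hasDerivAt_id' t).fun_add (hasDerivAt_negMulLog ht.1.ne')).congr_deriv (by ring)
  rw [hderiv.deriv]
  exact neg_pos.2 (log_neg ht.1 ht.2)

theorem negMulLog_lt_negMulLog_one_sub {q : ℝ} (hq : 1 / 2 < q) (hq1 : q < 1) :
    negMulLog q < negMulLog (1 - q) := by
  have hslope : (log 1 - log q) / (1 - q) < (log q - log (1 - q)) / (q - (1 - q)) :=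
    strictConcaveOn_log_Ioi.slope_anti_adjacent (mem_Ioi.2 (sub_pos.2 hq1))
      (mem_Ioi.2 one_pos) (by linarith) hq1
  rw [log_one, div_lt_div_iff₀ (by linarith) (by linarith)] at hslope
  unfold negMulLog
  linarith

theorem negMulLog_rpow {x : ℝ} (hx : 0 < x) (r : ℝ) :
    negMulLog (x ^ r) = r * x ^ (r - 1) * negMulLog x := by
  rw [negMulLog, negMulLog, log_rpow hx, rpow_sub_one hx.ne']
  field_simp

theorem neg_mul_focalLossDeriv (γ : ℝ) {q : ℝ} (hq0 : q ≠ 0) (hq1 : q ≠ 1) :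
    -(q * focalLossDeriv γ q) = (1 - q) ^ γ + γ * (1 - q) ^ (γ - 1) * negMulLog q := by
  have hq : 1 - q ≠ 0 := sub_ne_zero.2 hq1.symm
  rw [focalLossDeriv, negMulLog, one_div, log_inv, rpow_sub_one hq]
  field_simp
  ring

theorem mul_focalLossDeriv_one_sub_lt {γ q : ℝ} (hγ : 0 < γ) (hq : 1 / 2 < q) (hq1 : q < 1) :
    (1 - q) * focalLossDeriv γ (1 - q) < q * focalLossDeriv γ q := by
  have hq0 : 0 < q := by linarith
  have hq' : 0 < 1 - q := sub_pos.2 hq1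
  have hentropy := negMulLog_lt_negMulLog_one_sub hq hq1
  have hpow_mem {x : ℝ} (hx0 : 0 < x) (hx1 : x < 1) : x ^ γ ∈ Icc (0 : ℝ) 1 :=
    ⟨by positivity, rpow_le_one hx0.le hx1.le hγ.le⟩
  rw [← neg_lt_neg_iff]
  calc -(q * focalLossDeriv γ q)
      = (1 - q) ^ γ + γ * (1 - q) ^ (γ - 1) * negMulLog q :=
        neg_mul_focalLossDeriv γ hq0.ne' hq1.ne
    _ < (1 - q) ^ γ + γ * (1 - q) ^ (γ - 1) * negMulLog (1 - q) := by gcongr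
    _ = (1 - q) ^ γ + negMulLog ((1 - q) ^ γ) := by rw [negMulLog_rpow hq']
    _ < q ^ γ + negMulLog (q ^ γ) :=
        strictMonoOn_id_add_negMulLog (hpow_mem hq' (by linarith)) (hpow_mem hq0 hq1)
          (rpow_lt_rpow hq'.le (by linarith) hγ)
    _ = q ^ γ + γ * q ^ (γ - 1) * negMulLog q := by rw [negMulLog_rpow hq0]
    _ < q ^ γ + γ * q ^ (γ - 1) * negMulLog (1 - q) := by gcongr
    _ = -((1 - q) * focalLossDeriv γ (1 - q)) := by
        rw [neg_mul_focalLossDeriv γ hq'.ne' (by linarith), sub_sub_cancel]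

theorem odds_lt_of_focalLossDeriv_eq {γ α p₁ p₂ q : ℝ} (hγ : 0 < γ) (hα : 0 < α)
    (hp₂ : 0 < p₂) (hp : p₂ < p₁) (hq1 : q < 1)
    (h₁ : focalLossDeriv γ q = -α / p₁) (h₂ : focalLossDeriv γ (1 - q) = -α / p₂) :
    q / (1 - q) < p₁ / p₂ := by
  have hp₁ : 0 < p₁ := hp₂.trans hp
  have hq' : 0 < 1 - q := sub_pos.2 hq1
  rcases le_or_gt q (1 / 2) with hq | hq
  · calc q / (1 - q) ≤ 1 := (div_le_one hq').2 (by linarith)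
      _ < p₁ / p₂ := (one_lt_div hp₂).2 hp
  · have hlt : α * (q / p₁) < α * ((1 - q) / p₂) := by
      have := mul_focalLossDeriv_one_sub_lt hγ hq hq1
      rw [h₁, h₂] at this
      linear_combination this
    have hdiv : q / p₁ < (1 - q) / p₂ := lt_of_mul_lt_mul_left hlt hα.le
    rw [div_lt_div_iff₀ hp₁ hp₂] at hdiv
    rw [div_lt_div_iff₀ hq' hp₂]
    linarith

/-- on a two-point support, the focal-entropy minimizer strictly
decreases the larger probability and strictly increases the smaller one. -/
theorem focalEntropy_minimizer_two_point
    {ι : Type*} (x₁ x₂ : ι) (hne : x₁ ≠ x₂) (hcover : ∀ x : ι, x = x₁ ∨ x = x₂)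
    (γ : ℝ) (hγ : 0 < γ)
    (P : ι → ℝ) (hP2 : 0 < P x₂) (hP12 : P x₂ < P x₁) (hPsum : P x₁ + P x₂ = 1)
    (α : ℝ) (hα : 0 < α)
    (Qstar : ι → ℝ)
    (hQstar : ∀ x : ι, 0 < Qstar x ∧ Qstar x < 1 ∧
      focalLossDeriv γ (Qstar x) = -α / P x)
    (hQstarsum : Qstar x₁ + Qstar x₂ = 1) :
    Qstar x₁ < P x₁ ∧ P x₂ < Qstar x₂ := by
  obtain ⟨-, hq1, h₁⟩ := hQstar x₁
  obtain ⟨-, -, h₂⟩ := hQstar x₂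
  have hQ₂ : Qstar x₂ = 1 - Qstar x₁ := eq_sub_of_add_eq' hQstarsum
  rw [hQ₂] at h₂
  have hodds : Qstar x₁ / (1 - Qstar x₁) < P x₁ / P x₂ :=
    odds_lt_of_focalLossDeriv_eq hγ hα hP2 hP12 hq1 h₁ h₂
  rw [div_lt_div_iff₀ (sub_pos.2 hq1) hP2] at hodds
  have hlt : Qstar x₁ < P x₁ := by linear_combination hodds - Qstar x₁ * hPsum
  exact ⟨hlt, by linarith⟩
end

section
/- Let X be a countable set and let P : X → ℝ satisfy P(x) ≥ 0 for all x and ∑_x P(x) = 1. For γ ≥ 0 the family x ↦ P(x)^((1-P(x))^γ) (real powers, with 0^t = 0 for t > 0) is summable and satisfies 1 ≤ ∑_x P(x)^((1-P(x))^γ) ≤ exp(e^(1/e) · γ); equivalently, h_γ(P) = log ∑_x P(x)^((1-P(x))^γ) satisfies 0 ≤ h_γ(P) ≤ e^(1/e) · γ. Moreover, if P(x) > 0 for at least two distinct points x, then γ ↦ h_γ(P) is strictly increasing on [0,∞). -/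
/-!
For `p ∈ [0, 1]` the map `γ ↦ p ^ ((1 - p) ^ γ)` is increasing, with value `p` at `γ = 0`; summing
over `X` gives the lower bound and the strict monotonicity. For the upper bound, the tangent
inequality `(1 - p) ^ γ ≥ 1 + γ log (1 - p)` gives
`p ^ ((1 - p) ^ γ) ≤ p * exp (γ * (log p * log (1 - p)))`, and `log p * log (1 - p) ≤ 1` on
`(0, 1)`. Hence `h_γ(P) ≤ γ`, which is sharper than `e^(1/e) γ`.
-/

/-- The functional `h_γ(P) = log ∑ₓ P(x)^((1 - P(x))^γ)`, with the sum written as a `tsum`; it is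
meaningful when that family is summable. -/
noncomputable def hGamma {X : Type*} (P : X → ℝ) (γ : ℝ) : ℝ :=
  Real.log (∑' x, P x ^ ((1 - P x) ^ γ))

section Pointwise

variable {p γ : ℝ}

lemma strictMono_rpow_one_sub_rpow (h0 : 0 < p) (h1 : p < 1) :
    StrictMono fun γ : ℝ => p ^ ((1 - p) ^ γ) := fun _ _ h =>
  Real.rpow_lt_rpow_of_exponent_gt h0 h1
    (Real.rpow_lt_rpow_of_exponent_gt (sub_pos.2 h1) (sub_lt_self 1 h0) h)

lemma monotone_rpow_one_sub_rpow (h0 : 0 ≤ p) (h1 : p ≤ 1) :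
    Monotone fun γ : ℝ => p ^ ((1 - p) ^ γ) := by
  rcases h0.eq_or_lt with rfl | h0
  · simp [monotone_const]
  rcases h1.eq_or_lt with rfl | h1
  · simp [monotone_const]
  exact (strictMono_rpow_one_sub_rpow h0 h1).monotone

lemma le_rpow_one_sub_rpow (h0 : 0 ≤ p) (h1 : p ≤ 1) (hγ : 0 ≤ γ) :
    p ≤ p ^ ((1 - p) ^ γ) := by
  simpa using monotone_rpow_one_sub_rpow h0 h1 hγ

lemma log_mul_log_one_sub_le_one (h0 : 0 < p) (h1 : p < 1) :
    Real.log p * Real.log (1 - p) ≤ 1 := by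
  have hq : 0 < 1 - p := sub_pos.2 h1
  have neg_log_le {x : ℝ} (hx : 0 < x) : -Real.log x ≤ (1 - x) / x := by
    rw [sub_div, div_self hx.ne', one_div]
    linarith [Real.one_sub_inv_le_log_of_pos hx]
  calc Real.log p * Real.log (1 - p)
      = -Real.log p * -Real.log (1 - p) := (neg_mul_neg _ _).symm
    _ ≤ (1 - p) / p * ((1 - (1 - p)) / (1 - p)) :=
      mul_le_mul (neg_log_le h0) (neg_log_le hq)
        (neg_nonneg.2 (Real.log_nonpos hq.le (sub_le_self 1 h0.le))) (by positivity)
    _ = 1 := by field_simp; ring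

lemma rpow_one_sub_rpow_le_mul_exp (h0 : 0 ≤ p) (h1 : p ≤ 1) (hγ : 0 ≤ γ) :
    p ^ ((1 - p) ^ γ) ≤ p * Real.exp γ := by
  rcases h0.eq_or_lt with rfl | h0
  · simp
  rcases h1.eq_or_lt with rfl | h1
  · simpa using hγ
  have hq : 0 < 1 - p := sub_pos.2 h1
  have tangent : 1 + γ * Real.log (1 - p) ≤ (1 - p) ^ γ := by
    rw [← Real.log_rpow hq]
    linarith [Real.log_le_sub_one_of_pos (Real.rpow_pos_of_pos hq γ)]
  calc p ^ ((1 - p) ^ γ)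
      ≤ p ^ (1 + γ * Real.log (1 - p)) := Real.rpow_le_rpow_of_exponent_ge h0 h1.le tangent
    _ = p * Real.exp (γ * (Real.log p * Real.log (1 - p))) := by
      rw [Real.rpow_add h0, Real.rpow_one, Real.rpow_def_of_pos h0, mul_left_comm]
    _ ≤ p * Real.exp γ := by
      gcongr
      exact mul_le_of_le_one_right hγ (log_mul_log_one_sub_le_one h0 h1)

end Pointwise

section Sums

variable {X : Type*} {P : X → ℝ} {γ : ℝ}

lemma summable_rpow_one_sub_rpow (h0 : ∀ x, 0 ≤ P x) (h1 : ∀ x, P x ≤ 1) (hs : Summable P)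
    (γ : ℝ) : Summable fun x => P x ^ ((1 - P x) ^ γ) :=
  .of_nonneg_of_le (fun x => Real.rpow_nonneg (h0 x) _)
    (fun x => (monotone_rpow_one_sub_rpow (h0 x) (h1 x) (le_abs_self γ)).trans
      (rpow_one_sub_rpow_le_mul_exp (h0 x) (h1 x) (abs_nonneg γ)))
    (hs.mul_right _)

lemma tsum_le_tsum_rpow_one_sub_rpow (h0 : ∀ x, 0 ≤ P x) (h1 : ∀ x, P x ≤ 1) (hs : Summable P)
    (hγ : 0 ≤ γ) : ∑' x, P x ≤ ∑' x, P x ^ ((1 - P x) ^ γ) :=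
  hs.tsum_le_tsum (fun x => le_rpow_one_sub_rpow (h0 x) (h1 x) hγ)
    (summable_rpow_one_sub_rpow h0 h1 hs γ)

lemma tsum_rpow_one_sub_rpow_le_mul_exp (h0 : ∀ x, 0 ≤ P x) (h1 : ∀ x, P x ≤ 1)
    (hs : Summable P) (hγ : 0 ≤ γ) :
    ∑' x, P x ^ ((1 - P x) ^ γ) ≤ (∑' x, P x) * Real.exp γ :=
  tsum_mul_right (f := P) ▸ (summable_rpow_one_sub_rpow h0 h1 hs γ).tsum_le_tsum
    (fun x => rpow_one_sub_rpow_le_mul_exp (h0 x) (h1 x) hγ) (hs.mul_right _)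

lemma strictMono_tsum_rpow_one_sub_rpow (h0 : ∀ x, 0 ≤ P x) (h1 : ∀ x, P x ≤ 1)
    (hs : Summable P) {x : X} (hx0 : 0 < P x) (hx1 : P x < 1) :
    StrictMono fun γ : ℝ => ∑' x, P x ^ ((1 - P x) ^ γ) := fun a b hab =>
  Summable.tsum_lt_tsum (fun y => monotone_rpow_one_sub_rpow (h0 y) (h1 y) hab.le)
    (strictMono_rpow_one_sub_rpow hx0 hx1 hab) (summable_rpow_one_sub_rpow h0 h1 hs a)
    (summable_rpow_one_sub_rpow h0 h1 hs b)

lemma strictMono_hGamma (h0 : ∀ x, 0 ≤ P x) (h1 : ∀ x, P x ≤ 1) (hs : Summable P) {x : X}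
    (hx0 : 0 < P x) (hx1 : P x < 1) : StrictMono (hGamma P) := fun a _ hab =>
  have tsum_pos : 0 < ∑' y, P y ^ ((1 - P y) ^ a) :=
    (summable_rpow_one_sub_rpow h0 h1 hs a).tsum_pos (fun y => Real.rpow_nonneg (h0 y) _) x
      (Real.rpow_pos_of_pos hx0 _)
  Real.log_lt_log tsum_pos (strictMono_tsum_rpow_one_sub_rpow h0 h1 hs hx0 hx1 hab)

end Sums

theorem hGamma_bounds_and_strictMono_general {X : Type*} {P : X → ℝ} (hP : ∀ x, 0 ≤ P x)
    (hsum : HasSum P 1) :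
    (∀ γ : ℝ, Summable fun x => P x ^ ((1 - P x) ^ γ)) ∧
    (∀ γ : ℝ, 0 ≤ γ →
      1 ≤ ∑' x, P x ^ ((1 - P x) ^ γ) ∧
      ∑' x, P x ^ ((1 - P x) ^ γ) ≤ Real.exp γ ∧
      0 ≤ hGamma P γ ∧ hGamma P γ ≤ γ) ∧
    ((∃ x y : X, x ≠ y ∧ 0 < P x ∧ 0 < P y) → StrictMono (hGamma P)) := by
  have hP1 (x : X) : P x ≤ 1 := le_hasSum hsum x fun y _ => hP y
  refine ⟨summable_rpow_one_sub_rpow hP hP1 hsum.summable, fun γ hγ => ?_, ?_⟩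
  · have lower : 1 ≤ ∑' x, P x ^ ((1 - P x) ^ γ) :=
      hsum.tsum_eq ▸ tsum_le_tsum_rpow_one_sub_rpow hP hP1 hsum.summable hγ
    have upper : ∑' x, P x ^ ((1 - P x) ^ γ) ≤ Real.exp γ := by
      simpa [hsum.tsum_eq] using tsum_rpow_one_sub_rpow_le_mul_exp hP hP1 hsum.summable hγ
    exact ⟨lower, upper, Real.log_nonneg lower,
      (Real.log_le_iff_le_exp (one_pos.trans_le lower)).2 upper⟩
  · rintro ⟨x, y, hxy, hx, hy⟩
    have hx1 : P x < 1 := lt_hasSum hsum x (fun z _ => hP z) y hxy.symm hy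
    exact strictMono_hGamma hP hP1 hsum.summable hx hx1

/-- for a probability mass function `P` on a countable set and
`γ ≥ 0`, the family `x ↦ P x ^ ((1 - P x)^γ)` is summable with
`1 ≤ ∑ ≤ exp(e^(1/e) γ)`; equivalently `0 ≤ h_γ(P) ≤ e^(1/e) γ` where
`h_γ(P) = log ∑_x P x ^ ((1 - P x)^γ)`. Moreover if `P` has at least two support
points, `γ ↦ h_γ(P)` is strictly increasing on `[0,∞)`. -/
theorem hGamma_bounds_and_strictMono
    {X : Type*} [Countable X] (P : X → ℝ) (hP : ∀ x, 0 ≤ P x)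
    (hPs : Summable P) (hPsum : ∑' x, P x = 1) :
    (∀ γ : ℝ, 0 ≤ γ →
      Summable (fun x => P x ^ ((1 - P x) ^ γ)) ∧
      1 ≤ ∑' x, P x ^ ((1 - P x) ^ γ) ∧
      ∑' x, P x ^ ((1 - P x) ^ γ) ≤ Real.exp (Real.exp (1 / Real.exp 1) * γ) ∧
      0 ≤ Real.log (∑' x, P x ^ ((1 - P x) ^ γ)) ∧
      Real.log (∑' x, P x ^ ((1 - P x) ^ γ)) ≤ Real.exp (1 / Real.exp 1) * γ) ∧
    ((∃ x y : X, x ≠ y ∧ 0 < P x ∧ 0 < P y) →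
      StrictMonoOn (fun γ : ℝ => Real.log (∑' x, P x ^ ((1 - P x) ^ γ)))
        (Set.Ici 0)) := by
  obtain ⟨summable, bounds, strictMono⟩ :=
    hGamma_bounds_and_strictMono_general hP (hPsum ▸ hPs.hasSum)
  refine ⟨fun γ hγ => ?_, fun h => (strictMono h).strictMonoOn _⟩
  have hc : γ ≤ Real.exp (1 / Real.exp 1) * γ :=
    le_mul_of_one_le_left hγ (Real.one_le_exp (by positivity))
  obtain ⟨lower, upper, nonneg, le⟩ := bounds γ hγ
  exact ⟨summable γ, lower, upper.trans (Real.exp_le_exp.2 hc), nonneg, le.trans hc⟩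
end
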